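/- Let f : X → ℝ be Hölder continuous admitting a unique maximizing measure μ_∞, and let V be a calibrated subaction for f. If z ∈ X satisfies R_+^∞(z) < ∞, then the empirical measures ν_n := (1/n) Σ_{j=0}^{n−1} δ_{σ^j(z)} converge in the weak* topology to μ_∞ as n → ∞. -/

import Mathlib

open MeasureTheory Filter Topology Set ENNReal

noncomputable section

namespace GXY

variable {M : Type*}

/-- The shift map on the sequence space `ℕ → M`. -/
def shift (x : ℕ → M) : ℕ → M := fun n => x (n + 1)

/-- Prepending a symbol `a` to a sequence `x`. -/
def cons (a : M) (x : ℕ → M) : ℕ → M := fun n => Nat.casesOn n a x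

/-- The metric `d(x,y) = ∑ θ^n d_M(x_n, y_n)` on `ℕ → M`. -/
def D [MetricSpace M] (θ : ℝ) (x y : ℕ → M) : ℝ := ∑' n, θ ^ n * dist (x n) (y n)

/-- Hölder continuity with respect to the metric `D θ`. -/
def IsHolder [MetricSpace M] (θ : ℝ) (f : (ℕ → M) → ℝ) : Prop :=
  ∃ C > (0 : ℝ), ∃ α ∈ Set.Ioc (0 : ℝ) 1, ∀ x y, |f x - f y| ≤ C * (D θ x y) ^ α

/-- Shift-invariant Borel probability measures on `ℕ → M`. -/
def IsInvProb [MetricSpace M] [MeasurableSpace M] (μ : Measure (ℕ → M)) : Prop :=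
  IsProbabilityMeasure μ ∧ μ.map shift = μ

/-- The maximal ergodic average `β(f)`. -/
def betaF [MetricSpace M] [MeasurableSpace M] (f : (ℕ → M) → ℝ) : ℝ :=
  sSup { r | ∃ μ : Measure (ℕ → M), IsInvProb μ ∧ r = ∫ x, f x ∂μ }

/-- A maximizing measure for `f`. -/
def IsMaximizing [MetricSpace M] [MeasurableSpace M] (f : (ℕ → M) → ℝ)
    (μ : Measure (ℕ → M)) : Prop :=
  IsInvProb μ ∧ ∫ x, f x ∂μ = betaF f

/-- A calibrated subaction `V` for `f`:
`V y = max_{σ x = y} (f x + V x - β f)` for every `y`. -/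
def IsCalibrated [MetricSpace M] [MeasurableSpace M] (f V : (ℕ → M) → ℝ) : Prop :=
  Continuous V ∧
    ∀ y, IsGreatest { t | ∃ x, shift x = y ∧ t = f x + V x - betaF f } (V y)

/-- The Ruelle transfer operator `(L_g w)(x) = ∫_M e^{g(ax)} w(ax) dm(a)`. -/
def Ruelle [MetricSpace M] [MeasurableSpace M] (m : Measure M) (g w : (ℕ → M) → ℝ) :
    (ℕ → M) → ℝ :=
  fun x => ∫ a, Real.exp (g (cons a x)) * w (cons a x) ∂m

/-- `R₊ = β(f) + V ∘ σ - V - f ≥ 0`. -/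
def Rplus [MetricSpace M] [MeasurableSpace M] (f V : (ℕ → M) → ℝ) (x : ℕ → M) : ℝ :=
  betaF f + V (shift x) - V x - f x

/-- `R₊^∞(z) = ∑_{j≥0} R₊(σ^j z) ∈ [0,∞]`. -/
def RplusInf [MetricSpace M] [MeasurableSpace M] (f V : (ℕ → M) → ℝ) (z : ℕ → M) : ℝ≥0∞ :=
  ∑' j : ℕ, ENNReal.ofReal (Rplus f V (shift^[j] z))

/-- `R₋ = f + V - V ∘ σ - β(f) ≤ 0`. -/
def Rminus [MetricSpace M] [MeasurableSpace M] (f V : (ℕ → M) → ℝ) (x : ℕ → M) : ℝ :=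
  f x + V x - V (shift x) - betaF f

/-- The Birkhoff sum `R₋^k = ∑_{j<k} R₋ ∘ σ^j`. -/
def RminusBirk [MetricSpace M] [MeasurableSpace M] (f V : (ℕ → M) → ℝ) (k : ℕ)
    (z : ℕ → M) : ℝ :=
  ∑ j ∈ Finset.range k, Rminus f V (shift^[j] z)

/-- Extended-real logarithm with the convention `log 0 = -∞`. -/
def elog (t : ℝ) : EReal := if t = 0 then ⊥ else ((Real.log t : ℝ) : EReal)

theorem cont_of_holder [MetricSpace M] (hdiam : ∀ a b : M, dist a b ≤ 1)
    (θ : ℝ) (hθ : θ ∈ Set.Ioo (0 : ℝ) 1) (f : (ℕ → M) → ℝ) (hf : IsHolder θ f) :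
    Continuous f := by
  obtain ⟨C, hC, α, hα, h⟩ := hf
  have hD : Continuous (fun p : (ℕ → M) × (ℕ → M) => D θ p.1 p.2) := by
    unfold D
    refine continuous_tsum (u := fun n => θ ^ n) (fun n => by fun_prop)
      (summable_geometric_of_lt_one hθ.1.le hθ.2) ?_
    intro n p
    have h0 : 0 ≤ θ ^ n := pow_nonneg hθ.1.le n
    rw [Real.norm_of_nonneg (mul_nonneg h0 dist_nonneg)]
    exact mul_le_of_le_one_right h0 (hdiam _ _)
  rw [continuous_iff_continuousAt]
  intro x
  rw [ContinuousAt, tendsto_iff_dist_tendsto_zero]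
  have h1 : Tendsto (fun y => C * (D θ y x) ^ α) (𝓝 x) (𝓝 (C * (D θ x x) ^ α)) := by
    have : Continuous (fun y => D θ y x) :=
      hD.comp (continuous_id.prodMk continuous_const)
    exact ((this.rpow_const (fun _ => Or.inr hα.1.le)).const_mul C).tendsto x
  have h2 : C * (D θ x x) ^ α = 0 := by
    simp [D, Real.zero_rpow hα.1.ne']
  rw [h2] at h1
  refine squeeze_zero (fun _ => dist_nonneg) (fun y => ?_) h1
  rw [Real.dist_eq]
  exact h y x

theorem cont_shift [TopologicalSpace M] : Continuous (shift : (ℕ → M) → ℕ → M) := by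
  unfold shift
  fun_prop

/-- Empirical measure on `n + 1` points. -/
def emp [MeasurableSpace M] (z : ℕ → M) (n : ℕ) : ProbabilityMeasure (ℕ → M) :=
  ⟨((n + 1 : ℕ) : ℝ≥0∞)⁻¹ • ∑ j ∈ Finset.range (n + 1), Measure.dirac (shift^[j] z), ⟨by
    simp only [Measure.smul_apply, Measure.finsetSum_apply, measure_univ, Finset.sum_const,
      Finset.card_range, smul_eq_mul, nsmul_eq_mul, mul_one]
    exact ENNReal.inv_mul_cancel (by simp) (by finiteness)⟩⟩

theorem emp_integral [TopologicalSpace M] [CompactSpace M] [MeasurableSpace M]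
    [OpensMeasurableSpace (ℕ → M)] (z : ℕ → M) (n : ℕ) (w : (ℕ → M) → ℝ) (hw : Continuous w) :
    ∫ x, w x ∂(emp z n : Measure (ℕ → M)) =
      (1 / ((n + 1 : ℕ) : ℝ)) * ∑ j ∈ Finset.range (n + 1), w (shift^[j] z) := by
  have hm : StronglyMeasurable w := hw.measurable.stronglyMeasurable
  simp only [emp, ProbabilityMeasure.coe_mk]
  rw [integral_smul_measure, integral_finsetSum_measure]
  · simp only [integral_dirac' _ _ hm]
    rw [ENNReal.toReal_inv, ENNReal.toReal_natCast, smul_eq_mul, one_div]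
  · intro j _
    exact integrable_dirac' hm (by finiteness)

theorem empirical_measures_converge_to_maximizing_measure
    [MetricSpace M] [CompactSpace M] [ConnectedSpace M] [MeasurableSpace M] [BorelSpace M]
    (hdiam : ∀ a b : M, dist a b ≤ 1)
    (θ : ℝ) (hθ : θ ∈ Set.Ioo (0 : ℝ) 1)
    (f V : (ℕ → M) → ℝ) (hf : IsHolder θ f)
    (μinf : Measure (ℕ → M)) (hmax : IsMaximizing f μinf)
    (huniq : ∀ μ' : Measure (ℕ → M), IsMaximizing f μ' → μ' = μinf)
    (hV : IsCalibrated f V)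
    (z : ℕ → M) (hz : RplusInf f V z ≠ ⊤) :
    ∀ w : (ℕ → M) → ℝ, Continuous w →
      Tendsto (fun n : ℕ => (1 / (n : ℝ)) * ∑ j ∈ Finset.range n, w (shift^[j] z)) atTop
        (nhds (∫ x, w x ∂μinf)) := by
  haveI : SecondCountableTopology M := UniformSpace.secondCountable_of_separable M
  have hfc : Continuous f := cont_of_holder hdiam θ hθ f hf
  have hVc : Continuous V := hV.1
  have hRnn : ∀ x, 0 ≤ Rplus f V x := by
    intro x
    have := (hV.2 (shift x)).2 ⟨x, rfl, rfl⟩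
    unfold Rplus; linarith
  have hbdd : ∀ w : (ℕ → M) → ℝ, Continuous w → ∃ K, ∀ x, |w x| ≤ K := by
    intro w hw
    obtain ⟨K, hK⟩ := isCompact_univ.exists_bound_of_continuousOn hw.continuousOn
    exact ⟨K, fun x => hK x (mem_univ x)⟩
  have htel : ∀ w : (ℕ → M) → ℝ, Continuous w → Tendsto (fun n : ℕ =>
      (1 / ((n + 1 : ℕ) : ℝ)) * (w (shift^[n+1] z) - w z)) atTop (𝓝 0) := by
    intro w hw
    obtain ⟨K, hK⟩ := hbdd w hw
    have h0 : Tendsto (fun n : ℕ => (1 / ((n + 1 : ℕ) : ℝ))) atTop (𝓝 0) := by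
      simpa using tendsto_one_div_add_atTop_nhds_zero_nat (𝕜 := ℝ)
    have h1 : Tendsto (fun n : ℕ => (1 / ((n + 1 : ℕ) : ℝ)) * (2 * K)) atTop (𝓝 0) := by
      simpa using h0.mul_const (2 * K)
    refine squeeze_zero_norm (fun n => ?_) h1
    have hp : (0 : ℝ) ≤ 1 / ((n + 1 : ℕ) : ℝ) := by positivity
    rw [norm_mul, Real.norm_of_nonneg hp, Real.norm_eq_abs]
    refine mul_le_mul_of_nonneg_left ?_ hp
    have := abs_sub (w (shift^[n+1] z)) (w z)
    have := hK (shift^[n+1] z)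
    have := hK z
    linarith
  have hsum : Summable (fun j => Rplus f V (shift^[j] z)) := by
    have := ENNReal.summable_toReal hz
    refine this.congr (fun j => ?_)
    rw [ENNReal.toReal_ofReal (hRnn _)]
  have hR : Tendsto (fun n : ℕ => (1 / ((n + 1 : ℕ) : ℝ)) *
      ∑ j ∈ Finset.range (n + 1), Rplus f V (shift^[j] z)) atTop (𝓝 0) := by
    have h0 : Tendsto (fun n : ℕ => (1 / ((n + 1 : ℕ) : ℝ))) atTop (𝓝 0) := by
      simpa using tendsto_one_div_add_atTop_nhds_zero_nat (𝕜 := ℝ)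
    have h1 := (tendsto_add_atTop_iff_nat 1).2 hsum.hasSum.tendsto_sum_nat
    simpa using h0.mul h1
  have hfavg : Tendsto (fun n : ℕ => (1 / ((n + 1 : ℕ) : ℝ)) *
      ∑ j ∈ Finset.range (n + 1), f (shift^[j] z)) atTop (𝓝 (betaF f)) := by
    have h := ((tendsto_const_nhds (x := betaF f)).add (htel V hVc)).sub hR
    simp only [add_zero, sub_zero] at h
    refine h.congr (fun n => ?_)
    have hn : ((n + 1 : ℕ) : ℝ) ≠ 0 := by positivity
    have : ∑ j ∈ Finset.range (n + 1), Rplus f V (shift^[j] z) =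
        ((n + 1 : ℕ) : ℝ) * betaF f + (V (shift^[n+1] z) - V z)
          - ∑ j ∈ Finset.range (n + 1), f (shift^[j] z) := by
      have ht := Finset.sum_range_sub (fun j => V (shift^[j] z)) (n + 1)
      simp only [Function.iterate_succ_apply', Function.iterate_zero, id] at ht ⊢
      rw [← ht, eq_sub_iff_add_eq, ← Finset.sum_add_distrib]
      have hc : ((n + 1 : ℕ) : ℝ) * betaF f = ∑ j ∈ Finset.range (n + 1), betaF f := by simp
      rw [hc, ← Finset.sum_add_distrib]
      refine Finset.sum_congr rfl (fun j _ => ?_)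
      unfold Rplus; ring
    rw [this]
    field_simp
    ring
  intro w hw
  rw [← tendsto_add_atTop_iff_nat 1, tendsto_iff_ultrafilter]
  intro F hF
  obtain ⟨ν, hν⟩ : ∃ ν, Tendsto (emp z) F (𝓝 ν) :=
    ⟨(F.map (emp z)).lim, (F.map (emp z)).le_nhds_lim⟩
  have hlim : ∀ w : (ℕ → M) → ℝ, Continuous w → Tendsto (fun n : ℕ =>
      (1 / ((n + 1 : ℕ) : ℝ)) * ∑ j ∈ Finset.range (n + 1), w (shift^[j] z)) F
        (𝓝 (∫ x, w x ∂(ν : Measure (ℕ → M)))) := by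
    intro w hw
    have := ProbabilityMeasure.tendsto_iff_forall_integral_tendsto.1 hν
      (BoundedContinuousFunction.mkOfCompact ⟨w, hw⟩)
    refine this.congr (fun n => ?_)
    exact emp_integral z n w hw
  have hinv : (ν : Measure (ℕ → M)).map shift = ν := by
    haveI : IsProbabilityMeasure ((ν : Measure (ℕ → M)).map shift) :=
      Measure.isProbabilityMeasure_map cont_shift.measurable.aemeasurable
    refine ext_of_forall_integral_eq_of_IsFiniteMeasure (fun g => ?_)
    rw [integral_map cont_shift.measurable.aemeasurable
      g.continuous.measurable.aestronglyMeasurable]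
    have h1 := hlim (fun x => g (shift x)) (g.continuous.comp cont_shift)
    have h2 := (hlim g g.continuous).add ((htel g g.continuous).mono_left hF)
    rw [add_zero] at h2
    refine tendsto_nhds_unique h1 (h2.congr (fun n => ?_))
    rw [← mul_add]
    congr 1
    have ht := Finset.sum_range_sub (fun j => g (shift^[j] z)) (n + 1)
    rw [Finset.sum_sub_distrib] at ht
    simp only [Function.iterate_succ_apply', Function.iterate_zero, id] at ht ⊢
    linarith
  have hν' : (ν : Measure (ℕ → M)) = μinf :=
    huniq _ ⟨⟨inferInstance, hinv⟩,
      tendsto_nhds_unique (hlim f hfc) (hfavg.mono_left hF)⟩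
  rw [← hν']
  exact hlim w hw

end GXY
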